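/- The ground state energy of the subsystem toric code Hamiltonian H = −∑_T G(T) on the L×L torus is E₀ = −2√2·L², and the ground space is 4-fold degenerate (spanned by the 2 logical qubits in the trivial syndrome sector x_p = z_p = 1). -/

import Mathlib

/-- Qubits of the subsystem toric code on the `L × L` torus:
`(0,x,y)` is the vertex at `(x,y)`, `(1,x,y)` is the horizontal edge from `(x,y)` to `(x+1,y)`,
and `(2,x,y)` is the vertical edge from `(x,y)` to `(x,y+1)`. -/
abbrev Q (L : ℕ) := Fin 3 × ZMod L × ZMod L

/-- Support of the weight-6 X-type stabilizer of plaquette `p` (product of SW and NE triangles). -/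
def SXsup (L : ℕ) (p : ZMod L × ZMod L) : Finset (Q L) :=
  {(0, p.1, p.2), (0, p.1 + 1, p.2 + 1), (1, p.1, p.2), (1, p.1, p.2 + 1),
   (2, p.1, p.2), (2, p.1 + 1, p.2)}

/-- Support of the weight-6 Z-type stabilizer of plaquette `p` (product of SE and NW triangles). -/
def SZsup (L : ℕ) (p : ZMod L × ZMod L) : Finset (Q L) :=
  {(0, p.1 + 1, p.2), (0, p.1, p.2 + 1), (1, p.1, p.2), (1, p.1, p.2 + 1),
   (2, p.1, p.2), (2, p.1 + 1, p.2)}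

/-- SW (X-type) triangle of plaquette `p`. -/
def TSW (L : ℕ) (p : ZMod L × ZMod L) : Finset (Q L) :=
  {(0, p.1, p.2), (1, p.1, p.2), (2, p.1, p.2)}

/-- NE (X-type) triangle of plaquette `p`. -/
def TNE (L : ℕ) (p : ZMod L × ZMod L) : Finset (Q L) :=
  {(0, p.1 + 1, p.2 + 1), (1, p.1, p.2 + 1), (2, p.1 + 1, p.2)}

/-- SE (Z-type) triangle of plaquette `p`. -/
def TSE (L : ℕ) (p : ZMod L × ZMod L) : Finset (Q L) :=
  {(0, p.1 + 1, p.2), (1, p.1, p.2), (2, p.1 + 1, p.2)}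

/-- NW (Z-type) triangle of plaquette `p`. -/
def TNW (L : ℕ) (p : ZMod L × ZMod L) : Finset (Q L) :=
  {(0, p.1, p.2 + 1), (1, p.1, p.2 + 1), (2, p.1, p.2)}

/-- The horizontal line `Γ` at height `y₀`: all vertices and horizontal edges with `y = y₀`. -/
def Gam (L : ℕ) [NeZero L] (y₀ : ZMod L) : Finset (Q L) :=
  Finset.univ.filter fun q => (q.1 = 0 ∨ q.1 = 1) ∧ q.2.2 = y₀

/-- The vertical line `Λ` at horizontal position `x₀`: all vertices and vertical edges with `x = x₀`. -/
def Lam (L : ℕ) [NeZero L] (x₀ : ZMod L) : Finset (Q L) :=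
  Finset.univ.filter fun q => (q.1 = 0 ∨ q.1 = 2) ∧ q.2.1 = x₀

/-- `F₂`-indicator vector of a finite set. -/
def ind {α : Type*} [DecidableEq α] (S : Finset α) : α → ZMod 2 :=
  fun i => if i ∈ S then 1 else 0

/-- The Pauli operator `X^a Z^b = ∏ᵢ Xᵢ^{aᵢ} Zᵢ^{bᵢ}` (modulo phase) on qubits indexed by `ι`,
as a matrix in the computational basis: `(X^a Z^b)|y⟩ = (-1)^{b·y} |y+a⟩`. -/
def pauliOp {ι : Type*} [Fintype ι] [DecidableEq ι] (a b : ι → ZMod 2) :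
    Matrix (ι → ZMod 2) (ι → ZMod 2) ℂ :=
  Matrix.of fun x y => if x = y + a then (-1 : ℂ) ^ (∑ i, (b i * y i).val) else 0

/-- The subsystem toric code Hamiltonian `H = −∑_T G(T)`, summing the four triangle
operators of every plaquette, as a matrix on the `2^{3L²}`-dimensional Hilbert space. -/
noncomputable def Ham (L : ℕ) [NeZero L] : Matrix (Q L → ZMod 2) (Q L → ZMod 2) ℂ :=
  -∑ p : ZMod L × ZMod L,
    (pauliOp (ind (TSW L p)) 0 + pauliOp (ind (TNE L p)) 0 +
     pauliOp 0 (ind (TSE L p)) + pauliOp 0 (ind (TNW L p)))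


noncomputable section STC
open scoped ComplexOrder
set_option linter.unusedSectionVars false
open Matrix

def sg (t : ZMod 2) : ℂ := (-1) ^ t.val

lemma sg_zero : sg 0 = 1 := by simp [sg]
lemma sg_one : sg 1 = -1 := by simp [sg, ZMod.val_one]
lemma sg_add (s t : ZMod 2) : sg (s + t) = sg s * sg t := by
  rw [sg, sg, sg, ← pow_add, ZMod.val_add, ← neg_one_pow_eq_pow_mod_two]

lemma sg_sum {ι : Type*} (s : Finset ι) (f : ι → ZMod 2) :
    (-1 : ℂ) ^ (∑ i ∈ s, (f i).val) = sg (∑ i ∈ s, f i) := by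
  classical
  induction s using Finset.induction_on with
  | empty => simp [sg_zero]
  | insert a s ha ih => rw [Finset.sum_insert ha, Finset.sum_insert ha, pow_add, ih, sg_add]; rfl

section Pauli
variable {ι : Type*} [Fintype ι] [DecidableEq ι]

def PX (a : ι → ZMod 2) : Matrix (ι → ZMod 2) (ι → ZMod 2) ℂ := pauliOp a 0
def PZ (b : ι → ZMod 2) : Matrix (ι → ZMod 2) (ι → ZMod 2) ℂ := pauliOp 0 b

lemma PX_apply (a x y : ι → ZMod 2) : PX a x y = if x = y + a then 1 else 0 := by
  simp [PX, pauliOp]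

lemma PZ_eq (b : ι → ZMod 2) : PZ b = diagonal fun y => sg (b ⬝ᵥ y) := by
  ext x y
  simp only [PZ, pauliOp, of_apply, add_zero, diagonal_apply, dotProduct]
  by_cases h : x = y
  · subst h; simp [sg_sum]
  · simp [h]

lemma vadd_self (a : ι → ZMod 2) : a + a = 0 := by
  ext i; exact CharTwo.add_self_eq_zero _

lemma PX_zero : PX (0 : ι → ZMod 2) = 1 := by
  ext x y; simp [PX_apply, one_apply]

lemma PZ_zero : PZ (0 : ι → ZMod 2) = 1 := by
  simp [PZ_eq, sg_zero]

lemma PX_mul (a c : ι → ZMod 2) : PX a * PX c = PX (a + c) := by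
  ext x y
  simp [mul_apply, PX_apply, add_assoc, add_comm a c]

lemma PZ_mul (a c : ι → ZMod 2) : PZ a * PZ c = PZ (a + c) := by
  simp [PZ_eq, sg_add, add_dotProduct]

lemma PZ_PX (b a : ι → ZMod 2) : PZ b * PX a = sg (b ⬝ᵥ a) • (PX a * PZ b) := by
  ext x y
  simp only [PZ_eq, diagonal_mul, Matrix.smul_apply, mul_diagonal, PX_apply, smul_eq_mul]
  split_ifs with h
  · subst h; rw [dotProduct_add, sg_add]; ring
  · simp

lemma PX_sq (a : ι → ZMod 2) : PX a * PX a = 1 := by rw [PX_mul, vadd_self, PX_zero]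
lemma PZ_sq (a : ι → ZMod 2) : PZ a * PZ a = 1 := by rw [PZ_mul, vadd_self, PZ_zero]

lemma PX_herm (a : ι → ZMod 2) : (PX a)ᴴ = PX a := by
  ext x y
  simp only [conjTranspose_apply, PX_apply]
  have : (y = x + a) ↔ (x = y + a) := by
    constructor <;> (rintro rfl; rw [add_assoc, vadd_self, add_zero])
  simp [this]

lemma sg_star (t : ZMod 2) : star (sg t) = sg t := by simp [sg]

lemma PZ_herm (a : ι → ZMod 2) : (PZ a)ᴴ = PZ a := by
  rw [PZ_eq, diagonal_conjTranspose]
  congr 1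
  ext y; exact sg_star _

lemma PXX_comm (a c : ι → ZMod 2) : Commute (PX a) (PX c) := by
  unfold Commute SemiconjBy; rw [PX_mul, PX_mul, add_comm]
lemma PZZ_comm (a c : ι → ZMod 2) : Commute (PZ a) (PZ c) := by
  unfold Commute SemiconjBy; rw [PZ_mul, PZ_mul, add_comm]
lemma PZX_comm (a c : ι → ZMod 2) (h : a ⬝ᵥ c = 0) : Commute (PZ a) (PX c) := by
  unfold Commute SemiconjBy; rw [PZ_PX, h, sg_zero, one_smul]
lemma PZX_anti (a c : ι → ZMod 2) (h : a ⬝ᵥ c = 1) : PZ a * PX c = - (PX c * PZ a) := by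
  rw [PZ_PX, h, sg_one, neg_one_smul]

lemma trace_XZ (a b : ι → ZMod 2) :
    (PX a * PZ b).trace = if a = 0 ∧ b = 0 then (2 : ℂ) ^ Fintype.card ι else 0 := by
  by_cases ha : a = 0
  · subst ha
    by_cases hb : b = 0
    · subst hb
      simp [PX_zero, PZ_zero, trace_one, ZMod.card]
    · obtain ⟨i, hi⟩ := Function.ne_iff.mp hb
      have hi1 : b i = 1 := by
        revert hi; simp only [Pi.zero_apply]; generalize b i = t; revert t; decide
      have h := PZX_anti b (Pi.single i 1) (by simp [hi1])
      have h2 : (PZ b).trace = - (PZ b).trace := by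
        calc (PZ b).trace = (PZ b * PX (Pi.single i 1) * PX (Pi.single i 1)).trace := by
              rw [mul_assoc, PX_sq, mul_one]
          _ = - (PZ b).trace := by
              rw [h, neg_mul, trace_neg, trace_mul_comm, ← mul_assoc, PX_sq, one_mul]
      simp only [PX_zero, one_mul, hb, and_false, if_false]
      have := h2; linear_combination (1/2 : ℂ) * h2
  · simp only [ha, false_and, if_false]
    refine Finset.sum_eq_zero fun x _ => ?_
    rw [PZ_eq, diag_apply, mul_diagonal, PX_apply]
    simp [ha]
end Pauli

lemma W_proj {n κ : Type*} [Fintype n] [DecidableEq n] [DecidableEq κ]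
    (W Y Y' : κ → Matrix n n ℂ) (hW2 : ∀ p, W p * W p = 1) (hWc : ∀ p q, Commute (W p) (W q))
    (hY : ∀ p, Y p * Y' p = 1) (hYW : ∀ p, W p * Y p = - (Y p * W p))
    (hYWc : ∀ p q, p ≠ q → Commute (Y p) (W q)) (s : Finset κ) :
    ∃ P : Matrix n n ℂ, (∀ M, (∀ p ∈ s, Commute M (W p)) → Commute M P) ∧
      (∀ p ∈ s, W p * P = P) ∧ (∀ v, (∀ p ∈ s, W p *ᵥ v = v) → P *ᵥ v = v) ∧
      (∀ M, (∀ p ∈ s, Commute M (Y p)) → (M * P).trace = M.trace / 2 ^ s.card) := by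
  induction s using Finset.induction_on with
  | empty => exact ⟨1, by simp⟩
  | insert p s hp ih =>
    obtain ⟨P, h1, h2, h3, h4⟩ := ih
    have hWP : Commute (W p) P := h1 _ fun q _ => hWc p q
    refine ⟨P * ((1/2 : ℂ) • (1 + W p)), ?_, ?_, ?_, ?_⟩
    · intro M hM
      refine (h1 M fun q hq => hM q (Finset.mem_insert_of_mem hq)).mul_right ?_
      exact ((Commute.one_right M).add_right (hM p (Finset.mem_insert_self _ _))).smul_right _
    · intro q hq
      rcases Finset.mem_insert.mp hq with rfl | hq
      · rw [← mul_assoc, hWP.eq, mul_assoc, mul_smul_comm, mul_add, hW2, mul_one, add_comm]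
      · rw [← mul_assoc, h2 q hq]
    · intro v hv
      have h5 := hv p (Finset.mem_insert_self _ _)
      rw [← mulVec_mulVec, smul_mulVec, add_mulVec, one_mulVec, h5, ← two_smul ℂ v, smul_smul]
      norm_num
      exact h3 v fun q hq => hv q (Finset.mem_insert_of_mem hq)
    · intro M hM
      have hMY := hM p (Finset.mem_insert_self _ _)
      have hYP : Commute (Y p) P := h1 _ fun q hq => hYWc p q (by rintro rfl; exact hp hq)
      have hY' : Y' p * Y p = 1 := mul_eq_one_comm.mp (hY p)
      have h5 : (M * P * W p).trace = - (M * P * W p).trace := by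
        have hc : Commute (Y p) (M * P) := hMY.symm.mul_right hYP
        calc (M * P * W p).trace = (M * P * (W p * Y p) * Y' p).trace := by
              rw [mul_assoc (M * P), mul_assoc (W p), hY, mul_one]
          _ = - (Y p * (M * P * W p) * Y' p).trace := by
              rw [hYW, mul_neg, neg_mul, trace_neg, ← mul_assoc (M * P), ← hc.eq]
              simp only [mul_assoc]
          _ = _ := by rw [trace_mul_comm, ← mul_assoc, hY', one_mul]
      have h6 : (M * P * W p).trace = 0 := by linear_combination (1/2 : ℂ) * h5
      rw [mul_smul_comm, mul_smul_comm, trace_smul, mul_add, mul_one, mul_add, trace_add,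
        ← mul_assoc, h6, h4 M fun q hq => hM q (Finset.mem_insert_of_mem hq),
        Finset.card_insert_of_notMem hp, pow_succ]
      simp only [smul_eq_mul]
      ring

section Stab
variable {ι κ : Type*} [Fintype ι] [DecidableEq ι] [Fintype κ] [DecidableEq κ]

/-- combination of vectors -/
def comb (S : κ → ι → ZMod 2) (s : κ → ZMod 2) : ι → ZMod 2 := ∑ p, s p • S p

lemma comb_add (S : κ → ι → ZMod 2) (s t) : comb S (s + t) = comb S s + comb S t := by
  simp [comb, add_smul, Finset.sum_add_distrib]
lemma comb_single (S : κ → ι → ZMod 2) (p) : comb S (Pi.single p 1) = S p := by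
  simp [comb, Pi.single_apply, ite_smul]

lemma dot_comb (S : κ → ι → ZMod 2) (s) (b) (h : ∀ p, b ⬝ᵥ S p = 0) : b ⬝ᵥ comb S s = 0 := by
  simp [comb, dotProduct_sum, h]

/-- abstract projector -/
def SP (F : (ι → ZMod 2) → Matrix (ι → ZMod 2) (ι → ZMod 2) ℂ) (S : κ → ι → ZMod 2) :
    Matrix (ι → ZMod 2) (ι → ZMod 2) ℂ :=
  ((1/2 : ℂ) ^ Fintype.card κ) • ∑ s : κ → ZMod 2, F (comb S s)

lemma SP_fix (F : (ι → ZMod 2) → Matrix (ι → ZMod 2) (ι → ZMod 2) ℂ)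
    (hF : ∀ a c, F a * F c = F (a + c)) (S : κ → ι → ZMod 2) (p : κ) :
    F (S p) * SP F S = SP F S := by
  unfold SP
  rw [mul_smul_comm, Finset.mul_sum]
  congr 1
  refine Fintype.sum_equiv (Equiv.addLeft (Pi.single p 1)) _ _ fun s => ?_
  simp [hF, comb_add, comb_single]

lemma SP_vec (F : (ι → ZMod 2) → Matrix (ι → ZMod 2) (ι → ZMod 2) ℂ)
    (hF0 : F 0 = 1) (hF : ∀ a c, F a * F c = F (a + c)) (S : κ → ι → ZMod 2)
    (v : (ι → ZMod 2) → ℂ) (hv : ∀ p, F (S p) *ᵥ v = v) : SP F S *ᵥ v = v := by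
  have h : ∀ s, F (comb S s) *ᵥ v = v := by
    intro s
    unfold comb
    induction (Finset.univ : Finset κ) using Finset.induction_on with
    | empty => simp [hF0]
    | insert p t hp ih =>
      rw [Finset.sum_insert hp, ← hF, ← mulVec_mulVec, ih]
      have : s p = 0 ∨ s p = 1 := by generalize s p = t; revert t; decide
      rcases this with h | h <;> simp [h, hF0, hv]
  unfold SP
  rw [smul_mulVec, sum_mulVec]
  simp only [h, Finset.sum_const, Finset.card_univ, Fintype.card_fun, ZMod.card]
  rw [← Nat.cast_smul_eq_nsmul ℂ, smul_smul]
  simp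

lemma SP_comm (F : (ι → ZMod 2) → Matrix (ι → ZMod 2) (ι → ZMod 2) ℂ) (S : κ → ι → ZMod 2)
    (M) (h : ∀ s, Commute M (F (comb S s))) : Commute M (SP F S) := by
  unfold SP
  exact (Commute.sum_right _ _ _ fun s _ => h s).smul_right _

lemma SP_trace (S T : κ → ι → ZMod 2)
    (hS : (Finset.univ.filter fun s => comb S s = 0).card = 2)
    (hT : (Finset.univ.filter fun s => comb T s = 0).card = 2) :
    (SP PX S * SP PZ T).trace = (1/4 : ℂ) ^ Fintype.card κ * 4 * 2 ^ Fintype.card ι := by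
  have h4 : ((1/4 : ℂ)) = (1/2) * (1/2) := by norm_num
  unfold SP
  rw [smul_mul_smul_comm, trace_smul, Finset.sum_mul_sum, trace_sum, ← mul_pow, ← h4, smul_eq_mul,
    mul_assoc]
  congr 1
  simp only [trace_sum, trace_XZ]
  have : ∀ s t, (if comb S s = 0 ∧ comb T t = 0 then (2:ℂ) ^ Fintype.card ι else 0)
      = (if comb S s = 0 then 1 else 0) * ((if comb T t = 0 then 1 else 0) *
        (2:ℂ) ^ Fintype.card ι) := by
    intro s t; split_ifs <;> simp_all
  simp only [this, ← Finset.mul_sum, ← Finset.sum_mul, Finset.sum_boole, hS, hT]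
  norm_num
  ring
end Stab

lemma card_eig {n : Type*} [Fintype n] [DecidableEq n] {A : Matrix n n ℂ} (hA : A.IsHermitian)
    (μ : ℝ) : (Finset.univ.filter fun i => hA.eigenvalues i = μ).card =
      Module.finrank ℂ (LinearMap.ker (toLin' (A - (μ : ℂ) • 1))) := by
  have h1 : (A - (μ : ℂ) • 1).rank = Fintype.card {i // ((hA.eigenvalues i : ℂ) - μ) ≠ 0} := by
    have hs := hA.spectral_theorem
    have : A - (μ : ℂ) • 1 = (hA.eigenvectorUnitary : Matrix n n ℂ) *
        (diagonal fun i => (hA.eigenvalues i : ℂ) - μ) * star (hA.eigenvectorUnitary : Matrix n n ℂ) := by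
      have hd : (diagonal fun i => (hA.eigenvalues i : ℂ) - μ) =
          diagonal (RCLike.ofReal ∘ hA.eigenvalues) - (μ : ℂ) • (1 : Matrix n n ℂ) := by
        ext i j; by_cases h : i = j <;> simp [h, one_apply]
      rw [hd, mul_sub, sub_mul, mul_smul_comm, mul_one, smul_mul_assoc]
      rw [Unitary.conjStarAlgAut_apply] at hs
      rw [← Unitary.coe_star, Unitary.coe_mul_star_self]
      congr 1
    rw [this, rank_mul_eq_left_of_isUnit_det, rank_mul_eq_right_of_isUnit_det, rank_diagonal]
    · exact (isUnit_iff_isUnit_det _).mp (Unitary.toUnits hA.eigenvectorUnitary).isUnit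
    · exact (isUnit_iff_isUnit_det _).mp (Unitary.toUnits (star hA.eigenvectorUnitary)).isUnit
  have h2 := LinearMap.finrank_range_add_finrank_ker (toLin' (A - (μ : ℂ) • 1))
  have h3 : Module.finrank ℂ (LinearMap.range (toLin' (A - (μ : ℂ) • 1))) =
      (A - (μ : ℂ) • 1).rank := rfl
  rw [h3, h1, Module.finrank_pi, Fintype.card_subtype] at h2
  have h4 := Finset.card_filter_add_card_filter_not (s := (Finset.univ : Finset n))
    (fun i => hA.eigenvalues i = μ)
  have h5 : (Finset.univ.filter fun i => ((hA.eigenvalues i : ℂ) - μ) ≠ 0) =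
      Finset.univ.filter fun i => ¬ (hA.eigenvalues i = μ) := by
    ext i; simp [sub_eq_zero]
  rw [h5] at h2
  rw [Finset.card_univ] at h4
  omega

lemma K_sos {R : Type*} [Ring R] [Algebra ℂ R] (A B C D : R) (r : ℂ) (hr : r * r = 2)
    (hA : A * A = 1) (hB : B * B = 1) (hC : C * C = 1) (hD : D * D = 1)
    (hBA : B * A = A * B) (hDC : D * C = C * D) (h1 : C * A = -(A * C)) (h2 : C * B = -(B * C))
    (h3 : D * A = -(A * D)) (h4 : D * B = -(B * D)) :
    (2 * r) • (1:R) - (A + B + C + D) = (1 / (4 * r)) •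
      (((2 * r) • (1:R) - (A + B + C + D)) * ((2 * r) • (1:R) - (A + B + C + D)) +
      (1 - A * B) * (1 - A * B) + (1 - C * D) * (1 - C * D)) := by
  have hr0 : r ≠ 0 := by rintro rfl; norm_num at hr
  have hK : (A + B + C + D) * (A + B + C + D) = 4 + 2 • (A * B) + 2 • (C * D) := by
    simp only [mul_add, add_mul, hA, hB, hC, hD, hBA, hDC, h1, h2, h3, h4]
    have : (4 : R) = 1 + 1 + 1 + 1 := by norm_num
    rw [this]; abel
  have hS : (A * B) * (A * B) = 1 := by
    rw [mul_assoc, ← mul_assoc B, hBA, mul_assoc A, hB, mul_one, hA]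
  have hT : (C * D) * (C * D) = 1 := by
    rw [mul_assoc, ← mul_assoc D, hDC, mul_assoc C, hD, mul_one, hC]
  have h4' : (4 : R) = (4 : ℂ) • 1 := by rw [Algebra.smul_def, mul_one]; exact (map_ofNat _ 4).symm
  generalize A + B + C + D = K at *
  generalize A * B = S at *
  generalize C * D = T at *
  simp only [sub_mul, mul_sub, hK, hS, hT, smul_mul_assoc, mul_smul_comm, mul_one, one_mul, h4', smul_sub, smul_smul]
  have : 2 * r * (2 * r) = 8 := by linear_combination 4 * hr
  rw [this]
  match_scalars <;> field_simp <;> first | ring1 | linear_combination (8 : ℂ) * hr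

lemma star_sq {n : Type*} [Fintype n] (M : Matrix n n ℂ) (hM : Mᴴ = M) (v : n → ℂ) :
    star v ⬝ᵥ ((M * M) *ᵥ v) = star (M *ᵥ v) ⬝ᵥ (M *ᵥ v) := by
  rw [star_mulVec, hM, ← mulVec_mulVec, dotProduct_mulVec]


section Main
variable {ι κ : Type*} [Fintype ι] [DecidableEq ι] [Fintype κ] [DecidableEq κ]

/-- local term -/
def KK (A B C D : κ → ι → ZMod 2) (p : κ) : Matrix (ι → ZMod 2) (ι → ZMod 2) ℂ :=
  PX (A p) + PX (B p) + PZ (C p) + PZ (D p)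

/-- square root of two -/
def rt : ℂ := ((Real.sqrt 2 : ℝ) : ℂ)

lemma rt_sq : rt * rt = 2 := by
  rw [rt, ← Complex.ofReal_mul, Real.mul_self_sqrt (by norm_num)]; norm_num

lemma rt_ne : rt ≠ 0 := by
  intro h; have := rt_sq; rw [h] at this; norm_num at this

lemma rt_star : star rt = rt := by simp [rt]

/-- gauge qubit operator -/
def WW (A C : κ → ι → ZMod 2) (p : κ) : Matrix (ι → ZMod 2) (ι → ZMod 2) ℂ :=
  (1 / rt) • (PX (A p) + PZ (C p))

lemma KK_herm (A B C D : κ → ι → ZMod 2) (p : κ) : (KK A B C D p)ᴴ = KK A B C D p := by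
  simp [KK, PX_herm, PZ_herm]

/-- shifted local term -/
def MM (A B C D : κ → ι → ZMod 2) (p : κ) : Matrix (ι → ZMod 2) (ι → ZMod 2) ℂ :=
  (2 * rt) • 1 - KK A B C D p

lemma MM_herm (A B C D : κ → ι → ZMod 2) (p : κ) : (MM A B C D p)ᴴ = MM A B C D p := by
  have h : star (2 * rt) = 2 * rt := by rw [star_mul', rt_star]; simp
  rw [MM, conjTranspose_sub, conjTranspose_smul, conjTranspose_one, KK_herm, h]

lemma MM_sos (A B C D : κ → ι → ZMod 2) (p : κ)
    (hCA : C p ⬝ᵥ A p = 1) (hCB : C p ⬝ᵥ B p = 1)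
    (hDA : D p ⬝ᵥ A p = 1) (hDB : D p ⬝ᵥ B p = 1) :
    MM A B C D p = (1 / (4 * rt)) • (MM A B C D p * MM A B C D p +
      (1 - PX (A p + B p)) * (1 - PX (A p + B p)) +
      (1 - PZ (C p + D p)) * (1 - PZ (C p + D p))) := by
  have := K_sos (PX (A p)) (PX (B p)) (PZ (C p)) (PZ (D p)) rt rt_sq (PX_sq _) (PX_sq _) (PZ_sq _)
    (PZ_sq _) (PXX_comm _ _).eq (PZZ_comm _ _).eq (PZX_anti _ _ hCA) (PZX_anti _ _ hCB)
    (PZX_anti _ _ hDA) (PZX_anti _ _ hDB)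
  rw [PX_mul, PZ_mul] at this
  exact this

lemma MM_quad (A B C D : κ → ι → ZMod 2) (p : κ)
    (hCA : C p ⬝ᵥ A p = 1) (hCB : C p ⬝ᵥ B p = 1)
    (hDA : D p ⬝ᵥ A p = 1) (hDB : D p ⬝ᵥ B p = 1) (v : (ι → ZMod 2) → ℂ) :
    0 ≤ star v ⬝ᵥ (MM A B C D p *ᵥ v) ∧ (star v ⬝ᵥ (MM A B C D p *ᵥ v) = 0 →
      MM A B C D p *ᵥ v = 0 ∧ PX (A p + B p) *ᵥ v = v ∧ PZ (C p + D p) *ᵥ v = v) := by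
  have e : star v ⬝ᵥ (MM A B C D p *ᵥ v) = (1 / (4 * rt)) *
      (star (MM A B C D p *ᵥ v) ⬝ᵥ (MM A B C D p *ᵥ v) +
       star ((1 - PX (A p + B p)) *ᵥ v) ⬝ᵥ ((1 - PX (A p + B p)) *ᵥ v) +
       star ((1 - PZ (C p + D p)) *ᵥ v) ⬝ᵥ ((1 - PZ (C p + D p)) *ᵥ v)) := by
    rw [← star_sq _ (MM_herm _ _ _ _ _), ← star_sq _ (by simp [PX_herm]),
      ← star_sq _ (by simp [PZ_herm]), ← dotProduct_add, ← dotProduct_add, ← add_mulVec,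
      ← add_mulVec]
    conv_lhs => rw [MM_sos A B C D p hCA hCB hDA hDB]
    rw [smul_mulVec, dotProduct_smul, smul_eq_mul]
  have n1 := dotProduct_star_self_nonneg (MM A B C D p *ᵥ v)
  have n2 := dotProduct_star_self_nonneg ((1 - PX (A p + B p)) *ᵥ v)
  have n3 := dotProduct_star_self_nonneg ((1 - PZ (C p + D p)) *ᵥ v)
  have hc : 0 ≤ 1 / (4 * rt) := by
    have : 1 / (4 * rt) = ((1 / (4 * Real.sqrt 2) : ℝ) : ℂ) := by simp [rt]
    rw [this]
    exact Complex.zero_le_real.mpr (by positivity)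
  have hc0 : 1 / (4 * rt) ≠ 0 := by have := rt_ne; simp [this]
  rw [e]
  refine ⟨mul_nonneg hc (add_nonneg (add_nonneg n1 n2) n3), fun h => ?_⟩
  have h := (mul_eq_zero.mp h).resolve_left hc0
  rw [add_eq_zero_iff_of_nonneg (add_nonneg n1 n2) n3, add_eq_zero_iff_of_nonneg n1 n2] at h
  obtain ⟨⟨h1, h2⟩, h3⟩ := h
  rw [dotProduct_star_self_eq_zero] at h1 h2 h3
  rw [sub_mulVec, one_mulVec, sub_eq_zero] at h2 h3
  exact ⟨h1, h2.symm, h3.symm⟩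

/-- abstract Hamiltonian -/
def HH (A B C D : κ → ι → ZMod 2) : Matrix (ι → ZMod 2) (ι → ZMod 2) ℂ :=
  -∑ p, (PX (A p) + PX (B p) + PZ (C p) + PZ (D p))

lemma HH_eq (A B C D : κ → ι → ZMod 2) :
    HH A B C D - ((-(2 * Real.sqrt 2 * (Fintype.card κ : ℝ)) : ℝ) : ℂ) • 1 =
      ∑ p, MM A B C D p := by
  simp only [MM, Finset.sum_sub_distrib, Finset.sum_const, Finset.card_univ]
  have : HH A B C D = - ∑ p, KK A B C D p := rfl
  rw [this, ← Nat.cast_smul_eq_nsmul ℂ, smul_smul]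
  have h : ((-(2 * Real.sqrt 2 * (Fintype.card κ : ℝ)) : ℝ) : ℂ) = - ((Fintype.card κ : ℂ) * (2 * rt)) := by
    simp [rt]; ring
  rw [h, neg_smul]; abel

lemma HH_herm (A B C D : κ → ι → ZMod 2) : (HH A B C D).IsHermitian := by
  simp [HH, Matrix.IsHermitian, conjTranspose_sum, PX_herm, PZ_herm]

lemma ground_iff (A B C D : κ → ι → ZMod 2)
    (hCA : ∀ p, C p ⬝ᵥ A p = 1) (hCB : ∀ p, C p ⬝ᵥ B p = 1)
    (hDA : ∀ p, D p ⬝ᵥ A p = 1) (hDB : ∀ p, D p ⬝ᵥ B p = 1) (v : (ι → ZMod 2) → ℂ) :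
    (HH A B C D - ((-(2 * Real.sqrt 2 * (Fintype.card κ : ℝ)) : ℝ) : ℂ) • 1) *ᵥ v = 0 ↔
    ∀ p, PX (A p + B p) *ᵥ v = v ∧ PZ (C p + D p) *ᵥ v = v ∧ WW A C p *ᵥ v = v := by
  have hq := fun p => MM_quad A B C D p (hCA p) (hCB p) (hDA p) (hDB p) v
  have key : ∀ p, PX (A p + B p) *ᵥ v = v → PZ (C p + D p) *ᵥ v = v →
      MM A B C D p *ᵥ v = (2 * rt) • v - (2 * rt) • (WW A C p *ᵥ v) := by
    intro p h1 h2
    have h1' : PX (B p) *ᵥ v = PX (A p) *ᵥ v := by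
      conv_rhs => rw [← h1]
      rw [mulVec_mulVec, PX_mul, ← add_assoc, vadd_self, zero_add]
    have h2' : PZ (D p) *ᵥ v = PZ (C p) *ᵥ v := by
      conv_rhs => rw [← h2]
      rw [mulVec_mulVec, PZ_mul, ← add_assoc, vadd_self, zero_add]
    have hr := rt_ne
    rw [MM, KK, WW, sub_mulVec, smul_mulVec, one_mulVec, smul_mulVec, smul_smul]
    simp only [add_mulVec, h1', h2']
    congr 1
    have : 2 * rt * (1 / rt) = 2 := by field_simp
    rw [this, two_smul]; abel
  rw [HH_eq, sum_mulVec]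
  constructor
  · intro h p
    have h0 : ∑ p, star v ⬝ᵥ (MM A B C D p *ᵥ v) = 0 := by
      rw [← dotProduct_sum, h, dotProduct_zero]
    rw [Finset.sum_eq_zero_iff_of_nonneg fun p _ => (hq p).1] at h0
    obtain ⟨h1, h2, h3⟩ := (hq p).2 (h0 p (Finset.mem_univ _))
    refine ⟨h2, h3, ?_⟩
    rw [key p h2 h3, ← smul_sub, smul_eq_zero] at h1
    have := h1.resolve_left (by simp [rt_ne])
    exact (sub_eq_zero.mp this).symm
  · intro h
    refine Finset.sum_eq_zero fun p _ => ?_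
    obtain ⟨h1, h2, h3⟩ := h p
    rw [key p h1 h2, h3, sub_self]

lemma eig_ge (A B C D : κ → ι → ZMod 2)
    (hCA : ∀ p, C p ⬝ᵥ A p = 1) (hCB : ∀ p, C p ⬝ᵥ B p = 1)
    (hDA : ∀ p, D p ⬝ᵥ A p = 1) (hDB : ∀ p, D p ⬝ᵥ B p = 1) (hH : (HH A B C D).IsHermitian) (i) :
    -(2 * Real.sqrt 2 * (Fintype.card κ : ℝ)) ≤ hH.eigenvalues i := by
  set v : (ι → ZMod 2) → ℂ := ⇑(hH.eigenvectorBasis i) with hv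
  have hq : 0 ≤ star v ⬝ᵥ ((HH A B C D - ((-(2 * Real.sqrt 2 * (Fintype.card κ : ℝ)) : ℝ) : ℂ) • 1) *ᵥ v) := by
    rw [HH_eq, sum_mulVec, dotProduct_sum]
    exact Finset.sum_nonneg fun p _ => (MM_quad A B C D p (hCA p) (hCB p) (hDA p) (hDB p) v).1
  have h1 : star v ⬝ᵥ v = 1 := by
    have := hH.eigenvectorBasis.orthonormal.1 i
    rw [dotProduct_comm, hv, ← EuclideanSpace.inner_eq_star_dotProduct, inner_self_eq_norm_sq_to_K,
      this]
    simp
  rw [sub_mulVec, hv, hH.mulVec_eigenvectorBasis, ← hv, smul_mulVec, one_mulVec, dotProduct_sub,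
    dotProduct_smul, dotProduct_smul, h1] at hq
  have := (Complex.le_def.mp hq).1
  simp at this
  linarith

lemma finrank_ground (A B C D : κ → ι → ZMod 2)
    (hCA : ∀ p q, C p ⬝ᵥ A q = if p = q then 1 else 0)
    (hCB : ∀ p q, C p ⬝ᵥ B q = if p = q then 1 else 0)
    (hDA : ∀ p q, D p ⬝ᵥ A q = if p = q then 1 else 0)
    (hDB : ∀ p q, D p ⬝ᵥ B q = if p = q then 1 else 0)
    (hS : (Finset.univ.filter fun s => comb (fun p => A p + B p) s = 0).card = 2)
    (hT : (Finset.univ.filter fun s => comb (fun p => C p + D p) s = 0).card = 2)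
    (hcard : Fintype.card ι = 3 * Fintype.card κ) :
    Module.finrank ℂ (LinearMap.ker (toLin'
      (HH A B C D - ((-(2 * Real.sqrt 2 * (Fintype.card κ : ℝ)) : ℝ) : ℂ) • 1))) = 4 := by
  have hr := rt_ne
  have hr2 : 1 / rt * (1 / rt) * 2 = 1 := by rw [← rt_sq]; field_simp
  have anti : ∀ p, PZ (C p) * PX (A p) = - (PX (A p) * PZ (C p)) :=
    fun p => PZX_anti _ _ (by simp [hCA])
  have cne : ∀ p q, p ≠ q → Commute (PZ (C p)) (PX (A q)) :=
    fun p q h => PZX_comm _ _ (by simp [hCA, h])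
  have hWgen : ∀ (M : Matrix (ι → ZMod 2) (ι → ZMod 2) ℂ) p, Commute M (PX (A p)) →
      Commute M (PZ (C p)) → Commute M (WW A C p) :=
    fun M p h1 h2 => (h1.add_right h2).smul_right _
  have hW2 : ∀ p, WW A C p * WW A C p = 1 := by
    intro p
    rw [WW, smul_mul_smul_comm, add_mul, mul_add, mul_add, PX_sq, PZ_sq, anti,
      show (1 : Matrix (ι → ZMod 2) (ι → ZMod 2) ℂ) + PX (A p) * PZ (C p) +
        (-(PX (A p) * PZ (C p)) + 1) = (2 : ℂ) • 1 by rw [two_smul]; abel, smul_smul, hr2, one_smul]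
  have hWc : ∀ p q, Commute (WW A C p) (WW A C q) := by
    intro p q
    by_cases h : p = q
    · subst h; exact Commute.refl _
    · refine hWgen _ _ (Commute.symm ?_) (Commute.symm ?_)
      · exact hWgen _ _ (PXX_comm _ _) (cne _ _ h).symm
      · exact hWgen _ _ (cne _ _ (Ne.symm h)) (PZZ_comm _ _)
  have hY : ∀ p, (PX (A p) * PZ (C p)) * (PZ (C p) * PX (A p)) = 1 := by
    intro p
    rw [mul_assoc, ← mul_assoc (PZ (C p)), PZ_sq, one_mul, PX_sq]
  have hYW : ∀ p, WW A C p * (PX (A p) * PZ (C p)) = - ((PX (A p) * PZ (C p)) * WW A C p) := by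
    intro p
    rw [WW, smul_mul_assoc, mul_smul_comm, ← smul_neg]
    congr 1
    rw [add_mul, mul_add, ← mul_assoc, PX_sq, ← mul_assoc, anti, mul_assoc (PX (A p)) _ (PX (A p)),
      anti, mul_neg, ← mul_assoc, PX_sq, neg_mul, mul_assoc, PZ_sq]
    simp [add_comm]
  have hYWc : ∀ p q, p ≠ q → Commute (PX (A p) * PZ (C p)) (WW A C q) := by
    intro p q h
    refine hWgen _ _ ?_ ?_
    · exact (PXX_comm _ _).mul_left (cne _ _ h)
    · exact (cne _ _ (Ne.symm h)).symm.mul_left (PZZ_comm _ _)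
  obtain ⟨P, h1, h2, h3, h4⟩ := W_proj (WW A C) (fun p => PX (A p) * PZ (C p))
    (fun p => PZ (C p) * PX (A p)) hW2 hWc hY hYW hYWc Finset.univ
  set S := fun p => A p + B p with hSdef
  set T := fun p => C p + D p with hTdef
  have dS : ∀ p q, C p ⬝ᵥ S q = 0 := by
    intro p q; simp only [hSdef, dotProduct_add, hCA, hCB]; exact CharTwo.add_self_eq_zero _
  have dS' : ∀ p q, D p ⬝ᵥ S q = 0 := by
    intro p q; simp only [hSdef, dotProduct_add, hDA, hDB]; exact CharTwo.add_self_eq_zero _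
  have dT : ∀ p q, A p ⬝ᵥ T q = 0 := by
    intro p q; simp only [hTdef, dotProduct_comm (A p), add_dotProduct, hDA, hCA]
    exact CharTwo.add_self_eq_zero _
  have dTS : ∀ p q, T p ⬝ᵥ S q = 0 := by
    intro p q
    have : T p = C p + D p := rfl
    rw [this, add_dotProduct, dS, dS', add_zero]
  have cAX : ∀ p, Commute (PX (A p)) (SP PX S) := fun p => SP_comm _ _ _ fun s => PXX_comm _ _
  have cCX : ∀ p, Commute (PZ (C p)) (SP PX S) :=
    fun p => SP_comm _ _ _ fun s => PZX_comm _ _ (dot_comb _ _ _ (dS p))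
  have cCZ : ∀ p, Commute (PZ (C p)) (SP PZ T) := fun p => SP_comm _ _ _ fun s => PZZ_comm _ _
  have cAZ : ∀ p, Commute (PX (A p)) (SP PZ T) :=
    fun p => SP_comm _ _ _ fun s => (PZX_comm _ _ (by
      rw [dotProduct_comm]; exact dot_comb _ _ _ (dT p))).symm
  have cTX : ∀ p, Commute (PZ (T p)) (SP PX S) :=
    fun p => SP_comm _ _ _ fun s => PZX_comm _ _ (dot_comb _ _ _ (dTS p))
  have cWX : ∀ p, Commute (WW A C p) (SP PX S) :=
    fun p => (hWgen _ _ (cAX p).symm (cCX p).symm).symm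
  have cWZ : ∀ p, Commute (WW A C p) (SP PZ T) :=
    fun p => (hWgen _ _ (cAZ p).symm (cCZ p).symm).symm
  have hproj : LinearMap.IsProj (LinearMap.ker (toLin'
      (HH A B C D - ((-(2 * Real.sqrt 2 * (Fintype.card κ : ℝ)) : ℝ) : ℂ) • 1)))
      (toLin' (SP PX S * SP PZ T * P)) := by
    have hg := ground_iff A B C D (fun p => by simp [hCA]) (fun p => by simp [hCB])
      (fun p => by simp [hDA]) (fun p => by simp [hDB])
    constructor
    · intro v
      rw [LinearMap.mem_ker, toLin'_apply, toLin'_apply, hg]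
      intro p
      refine ⟨?_, ?_, ?_⟩
      · rw [mulVec_mulVec, ← mul_assoc, ← mul_assoc]
        have := SP_fix PX PX_mul S p
        rw [this]
      · have := SP_fix PZ PZ_mul T p
        have e : PZ (T p) * (SP PX S * SP PZ T * P) = SP PX S * SP PZ T * P := by
          rw [← mul_assoc, ← mul_assoc, (cTX p).eq, mul_assoc (SP PX S), this]
        rw [mulVec_mulVec, e]
      · rw [mulVec_mulVec, ← mul_assoc, ((cWX p).mul_right (cWZ p)).eq, mul_assoc,
          h2 p (Finset.mem_univ _)]
    · intro v hv
      rw [LinearMap.mem_ker, toLin'_apply, hg] at hv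
      rw [toLin'_apply, ← mulVec_mulVec, ← mulVec_mulVec, h3 v fun p _ => (hv p).2.2,
        SP_vec PZ PZ_zero PZ_mul T v fun p => (hv p).2.1,
        SP_vec PX PX_zero PX_mul S v fun p => (hv p).1]
  have ht := hproj.trace
  rw [trace_toLin'_eq, h4 _ fun p _ => ?_, SP_trace S T hS hT, hcard, Finset.card_univ] at ht
  · have h8 : (1 / 4 : ℂ) ^ Fintype.card κ * 4 * 2 ^ (3 * Fintype.card κ) / 2 ^ Fintype.card κ = 4 := by
      rw [pow_mul, mul_right_comm, ← mul_pow, mul_div_right_comm, ← div_pow]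
      norm_num
    rw [h8] at ht
    exact_mod_cast ht.symm
  · exact ((cAX p).mul_right (cAZ p)).symm.mul_right ((cCX p).mul_right (cCZ p)).symm
end Main

section Conc
variable (L : ℕ) [NeZero L]

lemma TSW_ind (i : Fin 3) (p q : ZMod L × ZMod L) : ind (TSW L p) (i, q) = if q = p then 1 else 0 := by
  obtain ⟨x, y⟩ := p
  obtain ⟨x', y'⟩ := q
  fin_cases i <;> simp [ind, TSW]

lemma TNE_ind (i : Fin 3) (p q : ZMod L × ZMod L) : ind (TNE L p) (i, q) =
    if q = p + (if i = 0 then (1, 1) else if i = 1 then (0, 1) else (1, 0)) then 1 else 0 := by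
  obtain ⟨x, y⟩ := p
  obtain ⟨x', y'⟩ := q
  fin_cases i <;> simp [ind, TNE]

lemma TSE_ind (i : Fin 3) (p q : ZMod L × ZMod L) : ind (TSE L p) (i, q) =
    if q = p + (if i = 0 then (1, 0) else if i = 1 then 0 else (1, 0)) then 1 else 0 := by
  obtain ⟨x, y⟩ := p
  obtain ⟨x', y'⟩ := q
  fin_cases i <;> simp [ind, TSE]

lemma TNW_ind (i : Fin 3) (p q : ZMod L × ZMod L) : ind (TNW L p) (i, q) =
    if q = p + (if i = 0 then (0, 1) else if i = 1 then (0, 1) else 0) then 1 else 0 := by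
  obtain ⟨x, y⟩ := p
  obtain ⟨x', y'⟩ := q
  fin_cases i <;> simp [ind, TNW]

lemma z2 (a b : ZMod 2) : a + b + a = b := by revert a b; decide

lemma dot_CA (p q : ZMod L × ZMod L) :
    ind (TSE L p) ⬝ᵥ ind (TSW L q) = if p = q then 1 else 0 := by
  rw [dotProduct, Fintype.sum_prod_type, Fin.sum_univ_three]
  simp only [TSE_ind, TSW_ind, ite_mul, one_mul, zero_mul, Finset.sum_ite_eq', Finset.mem_univ, if_true]
  obtain ⟨x, y⟩ := p
  obtain ⟨x', y'⟩ := q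
  simp
  simp only [z2, eq_comm]
lemma dot_CB (p q : ZMod L × ZMod L) :
    ind (TSE L p) ⬝ᵥ ind (TNE L q) = if p = q then 1 else 0 := by
  rw [dotProduct, Fintype.sum_prod_type, Fin.sum_univ_three]
  simp only [TSE_ind, TNE_ind, ite_mul, one_mul, zero_mul, Finset.sum_ite_eq', Finset.mem_univ, if_true]
  obtain ⟨x, y⟩ := p
  obtain ⟨x', y'⟩ := q
  simp
  simp only [eq_comm]
  exact (CharTwo.add_self_eq_zero _).symm
lemma dot_DA (p q : ZMod L × ZMod L) :
    ind (TNW L p) ⬝ᵥ ind (TSW L q) = if p = q then 1 else 0 := by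
  rw [dotProduct, Fintype.sum_prod_type, Fin.sum_univ_three]
  simp only [TNW_ind, TSW_ind, ite_mul, one_mul, zero_mul, Finset.sum_ite_eq', Finset.mem_univ, if_true]
  obtain ⟨x, y⟩ := p
  obtain ⟨x', y'⟩ := q
  simp
  simp only [eq_comm]
  exact (CharTwo.add_self_eq_zero _).symm
lemma dot_DB (p q : ZMod L × ZMod L) :
    ind (TNW L p) ⬝ᵥ ind (TNE L q) = if p = q then 1 else 0 := by
  rw [dotProduct, Fintype.sum_prod_type, Fin.sum_univ_three]
  simp only [TNW_ind, TNE_ind, ite_mul, one_mul, zero_mul, Finset.sum_ite_eq', Finset.mem_univ, if_true]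
  obtain ⟨x, y⟩ := p
  obtain ⟨x', y'⟩ := q
  simp
  simp only [z2]

lemma const1 {α : Type*} (f : ZMod L → α) (h : ∀ y, f (y + 1) = f y) (y) : f y = f 0 := by
  rw [← ZMod.natCast_zmod_val y]
  induction y.val with
  | zero => simp
  | succ n ih => rw [Nat.cast_succ, h, ih]

lemma card_two (σ : (ZMod L × ZMod L → ZMod 2) → Q L → ZMod 2)
    (h1 : ∀ s x y, σ s (1, x, y + 1) = s (x, y + 1) + s (x, y))
    (h2 : ∀ s x y, σ s (2, x + 1, y) = s (x + 1, y) + s (x, y))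
    (hc : ∀ c : ZMod 2, σ (fun _ => c) = 0) :
    (Finset.univ.filter fun s => σ s = 0).card = 2 := by
  have : (Finset.univ.filter fun s => σ s = 0) =
      (Finset.univ : Finset (ZMod 2)).image fun c => (fun _ => c) := by
    ext s
    simp only [Finset.mem_filter, Finset.mem_univ, true_and, Finset.mem_image]
    constructor
    · intro h
      refine ⟨s (0, 0), ?_⟩
      ext ⟨x, y⟩
      have e1 := const1 L (fun y => s (x, y)) (fun y => by
        have := h1 s x y; rw [h] at this; exact CharTwo.add_eq_zero.mp this.symm) y
      have e2 := const1 L (fun x => s (x, 0)) (fun x => by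
        have := h2 s x 0; rw [h] at this; exact CharTwo.add_eq_zero.mp this.symm) x
      rw [e1, e2]
    · rintro ⟨c, rfl⟩; exact hc c
  rw [this, Finset.card_image_of_injective, Finset.card_univ, ZMod.card]
  intro a b hab
  exact congrFun hab (0, 0)

lemma card_S : (Finset.univ.filter fun s =>
    comb (fun p => ind (TSW L p) + ind (TNE L p)) s = 0).card = 2 := by
  have e : ∀ (a b : ZMod L × ZMod L), a = b + (a - b) := fun a b => by abel
  have hcomb : ∀ s i q, comb (fun p => ind (TSW L p) + ind (TNE L p)) s (i, q) =
      s q + s (q - (if i = 0 then (1, 1) else if i = 1 then (0, 1) else (1, 0))) := by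
    intro s i q
    simp only [comb, Finset.sum_apply, Pi.smul_apply, Pi.add_apply, TSW_ind, TNE_ind,
      smul_eq_mul, mul_add, ← sub_eq_iff_eq_add, Finset.sum_add_distrib]
    simp
  refine card_two L _ ?_ ?_ ?_
  · intro s x y; rw [hcomb]; simp
  · intro s x y; rw [hcomb]; simp
  · intro c; ext ⟨i, q⟩; rw [hcomb]; exact CharTwo.add_self_eq_zero _

lemma card_T : (Finset.univ.filter fun s =>
    comb (fun p => ind (TSE L p) + ind (TNW L p)) s = 0).card = 2 := by
  have hcomb : ∀ s i q, comb (fun p => ind (TSE L p) + ind (TNW L p)) s (i, q) =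
      s (q - (if i = 0 then (1, 0) else if i = 1 then 0 else (1, 0))) +
      s (q - (if i = 0 then (0, 1) else if i = 1 then (0, 1) else 0)) := by
    intro s i q
    simp only [comb, Finset.sum_apply, Pi.smul_apply, Pi.add_apply, TSE_ind, TNW_ind,
      smul_eq_mul, mul_add, ← sub_eq_iff_eq_add, Finset.sum_add_distrib]
    simp
  refine card_two L _ ?_ ?_ ?_
  · intro s x y; rw [hcomb]; simp
  · intro s x y; rw [hcomb]; simp [add_comm]
  · intro c; ext ⟨i, q⟩; rw [hcomb]; exact CharTwo.add_self_eq_zero _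

end Conc
end STC

/-- the ground state energy of the subsystem toric code Hamiltonian
`H = −∑_T G(T)` on the `L × L` torus is `E₀ = −2√2 L²`, and the ground space is four-fold
degenerate. -/
theorem ground_energy_and_degeneracy (L : ℕ) [NeZero L] (hL : 2 ≤ L) :
    ∃ hH : (Ham L).IsHermitian,
      (∀ i, -(2 * Real.sqrt 2 * (L : ℝ) ^ 2) ≤ hH.eigenvalues i) ∧
      (Finset.univ.filter fun i =>
        hH.eigenvalues i = -(2 * Real.sqrt 2 * (L : ℝ) ^ 2)).card = 4 := by
  have hN : ((L : ℝ) ^ 2) = (Fintype.card (ZMod L × ZMod L) : ℝ) := by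
    simp [ZMod.card, sq]
  have hH : Ham L = HH (fun p => ind (TSW L p)) (fun p => ind (TNE L p))
    (fun p => ind (TSE L p)) (fun p => ind (TNW L p)) := rfl
  rw [hH, hN]
  refine ⟨HH_herm _ _ _ _, ?_, ?_⟩
  · exact eig_ge _ _ _ _ (fun p => by simp [dot_CA]) (fun p => by simp [dot_CB])
      (fun p => by simp [dot_DA]) (fun p => by simp [dot_DB]) _
  · rw [card_eig]
    exact finrank_ground _ _ _ _ (dot_CA L) (dot_CB L) (dot_DA L) (dot_DB L) (card_S L) (card_T L)
      (by simp)
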